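/- Let L > 0, N ∈ ℕ with N ≥ 2, a := 1/N, m₁, m₂ > 0, and let φ : ℝ → ℝ be C⁶ with φ(α+1) = φ(α) − L, φ′(α) ≤ −m₁ < 0, and |φ^{(k)}(α)| ≤ m₂ for 1 ≤ k ≤ 6. For a grid point α* = i₀·a, i₀ ∈ ℤ, define the exact-solution chemical potential f̄(α*) := −(2πa/L²)·Σ_{j∈G, j≢i₀} cot(π(φ(j·a)−φ(α*))/L) + ( 1/(φ(α*−a)−φ(α*)) − 1/(φ(α*)−φ(α*+a)) ) + a²·( 1/(φ(α*−a)−φ(α*))³ − 1/(φ(α*)−φ(α*+a))³ ), where G is any set of N consecutive integers containing i₀. Then there is C = C(m₁, m₂, L) with, for every grid point α*: f̄(α*) = μ(α*) + v₁(α*)·a + (v₂ + v₃)(α*)·a² + R, |R| ≤ C·a⁴, where μ(α) := (2π/L²)·PV∫₀¹ cot(π(φ(α)−φ(β))/L) dβ − φ″(α)/φ′(α)² − 3φ″(α)/φ′(α)⁴, v₁ := −φ″/(Lφ′²), v₂ := −φ⁗/(12φ′²) + (φ″/φ′⁴)((1/3)φ′φ‴ − (1/4)φ″²), and v₃ :=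 ( −(5/2)φ″³ − (1/4)φ′²φ⁗ + 2φ′φ″φ‴ )/φ′⁶. -/

import Mathlib

open Real Filter Topology MeasureTheory

/-- `v₁(α) = −φ″/(Lφ′²)`. -/
noncomputable def v1coef (L : ℝ) (φ : ℝ → ℝ) (α : ℝ) : ℝ :=
  -(iteratedDeriv 2 φ α) / (L * (deriv φ α) ^ 2)

/-- `v₂ = −φ⁗/(12φ′²) + (φ″/φ′⁴)((1/3)φ′φ‴ − (1/4)φ″²)`. -/
noncomputable def v2coef (φ : ℝ → ℝ) (α : ℝ) : ℝ :=
  -(iteratedDeriv 4 φ α) / (12 * (deriv φ α) ^ 2)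
    + (iteratedDeriv 2 φ α / (deriv φ α) ^ 4)
      * ((1 / 3) * deriv φ α * iteratedDeriv 3 φ α - (1 / 4) * (iteratedDeriv 2 φ α) ^ 2)

/-- `v₃ = (−(5/2)φ″³ − (1/4)φ′²φ⁗ + 2φ′φ″φ‴)/φ′⁶`. -/
noncomputable def v3coef (φ : ℝ → ℝ) (α : ℝ) : ℝ :=
  (-(5 / 2) * (iteratedDeriv 2 φ α) ^ 3
    - (1 / 4) * (deriv φ α) ^ 2 * iteratedDeriv 4 φ α
    + 2 * deriv φ α * iteratedDeriv 2 φ α * iteratedDeriv 3 φ α) / (deriv φ α) ^ 6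

def UU : Set ℝ := Set.Ioo (-(3/4)) (3/4)

lemma UU_open : IsOpen UU := isOpen_Ioo

lemma UU_mul {t s : ℝ} (ht : t ∈ UU) (hs : s ∈ Set.Icc (0:ℝ) 1) : s * t ∈ UU := by
  obtain ⟨h1, h2⟩ := ht
  obtain ⟨h3, h4⟩ := hs
  constructor <;> nlinarith

def UB {ι : Type*} : ℕ → (ι → ℝ → ℝ) → Prop
  | 0, F => (∃ M : ℝ, ∀ i, ∀ t ∈ UU, |F i t| ≤ M) ∧ ∀ i, ContinuousOn (F i) UU
  | n+1, F => (∃ M : ℝ, ∀ i, ∀ t ∈ UU, |F i t| ≤ M) ∧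
      ∃ F' : ι → ℝ → ℝ, (∀ i, ∀ t ∈ UU, HasDerivAt (F i) (F' i t) t) ∧ UB n F'

section UBsec
variable {ι : Type*}

lemma UB.bdd {n : ℕ} {F : ι → ℝ → ℝ} (h : UB n F) : ∃ M : ℝ, ∀ i, ∀ t ∈ UU, |F i t| ≤ M := by
  cases n with
  | zero => exact h.1
  | succ n => exact h.1

lemma UB.cont {n : ℕ} {F : ι → ℝ → ℝ} (h : UB n F) (i : ι) : ContinuousOn (F i) UU := by
  cases n with
  | zero => exact h.2 i
  | succ n =>
    obtain ⟨_, F', hF', _⟩ := h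
    exact fun t ht => (hF' i t ht).continuousAt.continuousWithinAt

lemma UB.down {n : ℕ} {F : ι → ℝ → ℝ} (h : UB (n+1) F) : UB n F := by
  induction n generalizing F with
  | zero => exact ⟨h.bdd, h.cont⟩
  | succ n ih =>
    obtain ⟨hM, F', hF', h'⟩ := h
    exact ⟨hM, F', hF', ih h'⟩

lemma UB.congr {n : ℕ} {F G : ι → ℝ → ℝ} (h : UB n F) (hFG : ∀ i, ∀ t ∈ UU, F i t = G i t) :
    UB n G := by
  have hb : ∃ M : ℝ, ∀ i, ∀ t ∈ UU, |G i t| ≤ M := by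
    obtain ⟨M, hM⟩ := h.bdd
    exact ⟨M, fun i t ht => by rw [← hFG i t ht]; exact hM i t ht⟩
  cases n with
  | zero => exact ⟨hb, fun i => (h.cont i).congr fun t ht => (hFG i t ht).symm⟩
  | succ n =>
    obtain ⟨_, F', hF', h'⟩ := h
    refine ⟨hb, F', fun i t ht => (hF' i t ht).congr_of_eventuallyEq ?_, h'⟩
    filter_upwards [UU_open.mem_nhds ht] with s hs
    exact (hFG i s hs).symm

lemma UB.add {n : ℕ} {F G : ι → ℝ → ℝ} (hF : UB n F) (hG : UB n G) :
    UB n (fun i t => F i t + G i t) := by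
  induction n generalizing F G with
  | zero =>
    obtain ⟨M, hM⟩ := hF.bdd
    obtain ⟨M', hM'⟩ := hG.bdd
    exact ⟨⟨M + M', fun i t ht => (abs_add_le _ _).trans (add_le_add (hM i t ht) (hM' i t ht))⟩,
      fun i => (hF.cont i).add (hG.cont i)⟩
  | succ n ih =>
    obtain ⟨M, hM⟩ := hF.bdd
    obtain ⟨M', hM'⟩ := hG.bdd
    obtain ⟨_, F', hF', hf⟩ := hF
    obtain ⟨_, G', hG', hg⟩ := hG
    exact ⟨⟨M + M', fun i t ht => (abs_add_le _ _).trans (add_le_add (hM i t ht) (hM' i t ht))⟩,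
      _, fun i t ht => (hF' i t ht).add (hG' i t ht), ih hf hg⟩

lemma UB.mul {n : ℕ} {F G : ι → ℝ → ℝ} (hF : UB n F) (hG : UB n G) :
    UB n (fun i t => F i t * G i t) := by
  have hb : ∃ M : ℝ, ∀ i, ∀ t ∈ UU, |F i t * G i t| ≤ M := by
    obtain ⟨M, hM⟩ := hF.bdd
    obtain ⟨M', hM'⟩ := hG.bdd
    refine ⟨M * M', fun i t ht => ?_⟩
    rw [abs_mul]
    exact mul_le_mul (hM i t ht) (hM' i t ht) (abs_nonneg _) ((abs_nonneg _).trans (hM i t ht))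
  induction n generalizing F G with
  | zero => exact ⟨hb, fun i => (hF.cont i).mul (hG.cont i)⟩
  | succ n ih =>
    have hF1 := hF.down
    have hG1 := hG.down
    obtain ⟨_, F', hF', hf⟩ := hF
    obtain ⟨_, G', hG', hg⟩ := hG
    have bd : ∀ {A B : ι → ℝ → ℝ}, UB n A → UB n B →
        ∃ M : ℝ, ∀ i, ∀ t ∈ UU, |A i t * B i t| ≤ M := by
      intro A B hA hB
      obtain ⟨M, hM⟩ := hA.bdd
      obtain ⟨M', hM'⟩ := hB.bdd
      refine ⟨M * M', fun i t ht => ?_⟩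
      rw [abs_mul]
      exact mul_le_mul (hM i t ht) (hM' i t ht) (abs_nonneg _) ((abs_nonneg _).trans (hM i t ht))
    exact ⟨hb, _, fun i t ht => (hF' i t ht).mul (hG' i t ht),
      (ih hf hG1 (bd hf hG1)).add (ih hF1 hg (bd hF1 hg))⟩

/-- constants in `t`. -/
lemma UB.const (n : ℕ) (c : ι → ℝ) (hc : ∃ M, ∀ i, |c i| ≤ M) : UB n (fun i _ => c i) := by
  induction n generalizing c with
  | zero =>
    obtain ⟨M, hM⟩ := hc
    exact ⟨⟨M, fun i t _ => hM i⟩, fun i => continuousOn_const⟩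
  | succ n ih =>
    obtain ⟨M, hM⟩ := hc
    exact ⟨⟨M, fun i t _ => hM i⟩, fun _ _ => 0, fun i t _ => hasDerivAt_const _ _,
      ih (fun _ => 0) ⟨0, by simp⟩⟩

lemma UB.cst (n : ℕ) (c : ℝ) : UB n (fun (_ : ι) (_ : ℝ) => c) :=
  UB.const n (fun _ => c) ⟨|c|, fun _ => le_rfl⟩

lemma UB.id (n : ℕ) : UB n (fun (_ : ι) (t : ℝ) => t) := by
  have hb : ∃ M : ℝ, ∀ _i : ι, ∀ t ∈ UU, |t| ≤ M :=
    ⟨3/4, fun i t ht => abs_le.2 ⟨ht.1.le, ht.2.le⟩⟩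
  cases n with
  | zero => exact ⟨hb, fun i => continuousOn_id⟩
  | succ n => exact ⟨hb, fun _ _ => 1, fun i t _ => hasDerivAt_id t, UB.cst n 1⟩

lemma UB.cmul {n : ℕ} {F : ι → ℝ → ℝ} (c : ℝ) (hF : UB n F) : UB n (fun i t => c * F i t) :=
  (UB.cst n c).mul hF

lemma UB.neg {n : ℕ} {F : ι → ℝ → ℝ} (hF : UB n F) : UB n (fun i t => - F i t) :=
  (hF.cmul (-1)).congr (by intros; ring)

lemma UB.sub {n : ℕ} {F G : ι → ℝ → ℝ} (hF : UB n F) (hG : UB n G) :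
    UB n (fun i t => F i t - G i t) :=
  (hF.add hG.neg).congr (by intros; ring)

lemma UB.pow {n : ℕ} {F : ι → ℝ → ℝ} (hF : UB n F) (k : ℕ) : UB n (fun i t => F i t ^ k) := by
  induction k with
  | zero => simpa using UB.cst n 1
  | succ k ih => exact (ih.mul hF).congr (by intros; ring)

lemma UB.inv {n : ℕ} {F : ι → ℝ → ℝ} (hF : UB n F) {m : ℝ} (hm : 0 < m)
    (h : ∀ i, ∀ t ∈ UU, m ≤ |F i t|) : UB n (fun i t => (F i t)⁻¹) := by
  have hb : ∃ M : ℝ, ∀ i, ∀ t ∈ UU, |(F i t)⁻¹| ≤ M := by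
    refine ⟨m⁻¹, fun i t ht => ?_⟩
    rw [abs_inv]
    exact inv_anti₀ hm (h i t ht)
  have hne : ∀ i, ∀ t ∈ UU, F i t ≠ 0 := fun i t ht h0 => by
    have := h i t ht
    rw [h0, abs_zero] at this
    linarith
  induction n with
  | zero => exact ⟨hb, fun i => (hF.cont i).inv₀ (hne i)⟩
  | succ n ih =>
    have h1 := ih hF.down
    obtain ⟨_, F', hF', hf⟩ := hF
    refine ⟨hb, _, fun i t ht => (hF' i t ht).inv (hne i t ht), ?_⟩
    exact (hf.neg.mul (h1.pow 2)).congr (by intros; rw [inv_pow, div_eq_mul_inv])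

lemma UB.comp {n : ℕ} {F : ι → ℝ → ℝ} (hF : UB n F) {Φ : ℝ → ℝ} (hΦ : ContDiff ℝ n Φ) :
    UB n (fun i t => Φ (F i t)) := by
  have hb : ∀ {Φ : ℝ → ℝ}, Continuous Φ → ∃ M : ℝ, ∀ i, ∀ t ∈ UU, |Φ (F i t)| ≤ M := by
    intro Φ hc
    obtain ⟨M, hM⟩ := hF.bdd
    obtain ⟨B, hB⟩ := (isCompact_Icc (a := -M) (b := M)).exists_bound_of_continuousOn
      hc.continuousOn
    exact ⟨B, fun i t ht => hB _ (abs_le.1 (hM i t ht))⟩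
  induction n generalizing Φ with
  | zero => exact ⟨hb hΦ.continuous, fun i => hΦ.continuous.comp_continuousOn (hF.cont i)⟩
  | succ n ih =>
    have hF1 := hF.down
    obtain ⟨_, F', hF', hf⟩ := hF
    have hd : ContDiff ℝ n (deriv Φ) := ((contDiff_succ_iff_deriv (n := n)).1 (by exact_mod_cast hΦ)).2.2
    have hdiff : Differentiable ℝ Φ := hΦ.differentiable (by simp)
    exact ⟨hb hΦ.continuous, _, fun i t ht => (hdiff _).hasDerivAt.comp t (hF' i t ht),
      (ih hF1 hd).mul hf⟩

lemma UB.iter {n : ℕ} {F : ι → ℝ → ℝ} (hF : UB n F) :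
    (∀ i, ContDiffOn ℝ n (F i) UU) ∧ ∃ M : ℝ, ∀ i, ∀ t ∈ UU, |iteratedDeriv n (F i) t| ≤ M := by
  induction n generalizing F with
  | zero =>
    refine ⟨fun i => ?_, ?_⟩
    · simpa [contDiffOn_zero] using hF.cont i
    · simpa using hF.bdd
  | succ n ih =>
    obtain ⟨_, F', hF', hf⟩ := hF
    obtain ⟨h1, M, hM⟩ := ih hf
    have heq : ∀ i, Set.EqOn (deriv (F i)) (F' i) UU := fun i t ht => (hF' i t ht).deriv
    refine ⟨fun i => ?_, M, fun i t ht => ?_⟩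
    · have := (contDiffOn_succ_iff_deriv_of_isOpen (𝕜 := ℝ) (n := n) (f := F i) UU_open).2
        ⟨fun t ht => (hF' i t ht).differentiableAt.differentiableWithinAt, by simp,
          (h1 i).congr (heq i)⟩
      exact_mod_cast this
    · rw [iteratedDeriv_succ']
      have : deriv (F i) =ᶠ[𝓝 t] F' i := by
        filter_upwards [UU_open.mem_nhds ht] with s hs using heq i hs
      rw [this.iteratedDeriv_eq]
      exact hM i t ht

/-- averaging operator -/
noncomputable def avg (k : ℕ) (f : ℝ → ℝ) (t : ℝ) : ℝ := ∫ s in (0:ℝ)..1, s ^ k * f (s * t)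

lemma avg_contOn {f : ℝ → ℝ} (hf : ContinuousOn f UU) (k : ℕ) {t : ℝ} (ht : t ∈ UU) :
    ContinuousOn (fun s => s ^ k * f (s * t)) (Set.uIcc (0:ℝ) 1) := by
  refine (continuousOn_id.pow k).mul (hf.comp (continuousOn_id.mul continuousOn_const) ?_)
  intro s hs
  rw [Set.uIcc_of_le zero_le_one] at hs
  exact UU_mul ht hs

lemma avg_bound {f : ℝ → ℝ} {M : ℝ} (hM : ∀ t ∈ UU, |f t| ≤ M) (k : ℕ) {t : ℝ} (ht : t ∈ UU) :
    |avg k f t| ≤ M := by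
  have := intervalIntegral.norm_integral_le_of_norm_le_const (a := (0:ℝ)) (b := 1) (C := M)
    (f := fun s => s ^ k * f (s * t)) ?_
  · simpa [avg] using this
  · intro s hs
    rw [Set.uIoc_of_le zero_le_one] at hs
    have h1 : |s ^ k| ≤ 1 := by
      rw [abs_pow]
      exact pow_le_one₀ (abs_nonneg _) (abs_le.2 ⟨by linarith [hs.1], hs.2⟩)
    have h2 := hM _ (UU_mul ht ⟨hs.1.le, hs.2⟩)
    rw [Real.norm_eq_abs, abs_mul]
    nlinarith [abs_nonneg (s ^ k), abs_nonneg (f (s * t))]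

lemma avg_hasDeriv {f f' : ℝ → ℝ} (hf : ∀ t ∈ UU, HasDerivAt f (f' t) t)
    (hc : ContinuousOn f' UU) {M : ℝ} (hM : ∀ t ∈ UU, |f' t| ≤ M) (k : ℕ) {t : ℝ} (ht : t ∈ UU) :
    HasDerivAt (avg k f) (avg (k+1) f' t) t := by
  have hfc : ContinuousOn f UU := fun t ht => (hf t ht).continuousAt.continuousWithinAt
  have := intervalIntegral.hasDerivAt_integral_of_dominated_loc_of_deriv_le (μ := volume)
    (F := fun t s => s ^ k * f (s * t)) (F' := fun t s => s ^ (k+1) * f' (s * t))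
    (x₀ := t) (s := UU) (a := 0) (b := 1) (bound := fun _ => M) (UU_open.mem_nhds ht)
    ?_ ?_ ?_ ?_ ?_ ?_
  · exact this.2
  · filter_upwards [UU_open.mem_nhds ht] with x hx
    exact ((avg_contOn hfc k hx).intervalIntegrable.def').aestronglyMeasurable
  · exact (avg_contOn hfc k ht).intervalIntegrable
  · exact ((avg_contOn hc (k+1) ht).intervalIntegrable.def').aestronglyMeasurable
  · refine Filter.Eventually.of_forall fun s hs x hx => ?_
    rw [Set.uIoc_of_le zero_le_one] at hs
    have h1 : |s ^ (k+1)| ≤ 1 := by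
      rw [abs_pow]
      exact pow_le_one₀ (abs_nonneg _) (abs_le.2 ⟨by linarith [hs.1], hs.2⟩)
    have h2 := hM _ (UU_mul hx ⟨hs.1.le, hs.2⟩)
    rw [Real.norm_eq_abs, abs_mul]
    nlinarith [abs_nonneg (s ^ (k+1)), abs_nonneg (f' (s * x))]
  · exact intervalIntegrable_const
  · refine Filter.Eventually.of_forall fun s hs x hx => ?_
    rw [Set.uIoc_of_le zero_le_one] at hs
    have h2 := hf _ (UU_mul hx ⟨hs.1.le, hs.2⟩)
    have h3 := (h2.comp x ((hasDerivAt_id x).const_mul s)).const_mul (s ^ k)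
    refine h3.congr_deriv ?_
    ring

lemma avg_cont {f : ℝ → ℝ} (hf : ContinuousOn f UU) {M : ℝ} (hM : ∀ t ∈ UU, |f t| ≤ M) (k : ℕ) :
    ContinuousOn (avg k f) UU := by
  intro t ht
  refine ContinuousAt.continuousWithinAt ?_
  refine intervalIntegral.continuousAt_of_dominated_interval (bound := fun _ => M) ?_ ?_ ?_ ?_
  · filter_upwards [UU_open.mem_nhds ht] with x hx
    exact ((avg_contOn hf k hx).intervalIntegrable.def').aestronglyMeasurable
  · filter_upwards [UU_open.mem_nhds ht] with x hx
    refine Filter.Eventually.of_forall fun s hs => ?_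
    rw [Set.uIoc_of_le zero_le_one] at hs
    have h1 : |s ^ k| ≤ 1 := by
      rw [abs_pow]
      exact pow_le_one₀ (abs_nonneg _) (abs_le.2 ⟨by linarith [hs.1], hs.2⟩)
    have h2 := hM _ (UU_mul hx ⟨hs.1.le, hs.2⟩)
    rw [Real.norm_eq_abs, abs_mul]
    nlinarith [abs_nonneg (s ^ k), abs_nonneg (f (s * x))]
  · exact intervalIntegrable_const
  · refine Filter.Eventually.of_forall fun s hs => ?_
    rw [Set.uIoc_of_le zero_le_one] at hs
    have h2 := (hf.continuousAt (UU_open.mem_nhds (UU_mul ht ⟨hs.1.le, hs.2⟩)))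
    exact continuousAt_const.mul (ContinuousAt.comp (f := fun x => s * x) h2 (by fun_prop))

lemma UB.avg {n : ℕ} {F : ι → ℝ → ℝ} (hF : UB n F) (k : ℕ) : UB n (fun i => avg k (F i)) := by
  induction n generalizing F k with
  | zero =>
    obtain ⟨M, hM⟩ := hF.bdd
    exact ⟨⟨M, fun i t ht => avg_bound (hM i) k ht⟩, fun i => avg_cont (hF.cont i) (hM i) k⟩
  | succ n ih =>
    obtain ⟨M, hM⟩ := hF.bdd
    obtain ⟨_, F', hF', hf⟩ := hF
    obtain ⟨M', hM'⟩ := hf.bdd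
    exact ⟨⟨M, fun i t ht => avg_bound (hM i) k ht⟩, _,
      fun i t ht => avg_hasDeriv (hF' i) (hf.cont i) (hM' i) k ht, ih hf (k+1)⟩

lemma avg_zero (k : ℕ) (f : ℝ → ℝ) : avg k f 0 = f 0 / (k + 1) := by
  simp [_root_.avg, intervalIntegral.integral_mul_const, integral_pow]
  ring

/-- `f t - f 0 = t * avg 0 f' t` -/
lemma avg_eq {f f' : ℝ → ℝ} (hf : ∀ t ∈ UU, HasDerivAt f (f' t) t)
    (hc : ContinuousOn f' UU) {t : ℝ} (ht : t ∈ UU) : f t - f 0 = t * avg 0 f' t := by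
  have h := intervalIntegral.integral_eq_sub_of_hasDerivAt (a := (0:ℝ)) (b := 1)
    (f := fun s => f (s * t)) (f' := fun s => t * (s ^ 0 * f' (s * t))) ?_ ?_
  · rw [intervalIntegral.integral_const_mul] at h
    simp only [one_mul, zero_mul] at h
    exact h.symm
  · intro s hs
    rw [Set.uIcc_of_le zero_le_one] at hs
    have h2 := hf _ (UU_mul ht hs)
    refine (h2.comp s ((hasDerivAt_id s).mul_const t)).congr_deriv ?_
    ring
  · exact ((avg_contOn hc 0 ht).intervalIntegrable).const_mul t

end UBsec

lemma taylor_step {D D' : ℝ → ℝ} {C : ℝ} {n : ℕ} (hD : ∀ t ∈ Set.Icc (0:ℝ) (1/2), HasDerivAt D (D' t) t)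
    (h0 : D 0 = 0) (hC : 0 ≤ C) (hb : ∀ t ∈ Set.Icc (0:ℝ) (1/2), |D' t| ≤ C * t ^ n) :
    ∀ t ∈ Set.Icc (0:ℝ) (1/2), |D t| ≤ C * t ^ (n+1) := by
  intro t ht
  have := norm_image_sub_le_of_norm_deriv_le_segment' (a := 0) (b := t) (f := D) (f' := D')
    (C := C * t ^ n)
    (fun x hx => (hD x ⟨hx.1, hx.2.trans ht.2⟩).hasDerivWithinAt)
    (fun x hx => (hb x ⟨hx.1, hx.2.le.trans ht.2⟩).trans (by
      have := hx.1
      have := hx.2.le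
      gcongr)) t ⟨ht.1, le_rfl⟩
  rw [h0, sub_zero, sub_zero, Real.norm_eq_abs] at this
  linarith [this, show C * t ^ n * t = C * t ^ (n+1) by ring]

lemma taylor_odd {ι : Type*} {f f1 f2 f3 : ι → ℝ → ℝ}
    (h1 : ∀ i, ∀ t ∈ UU, HasDerivAt (f i) (f1 i t) t)
    (h2 : ∀ i, ∀ t ∈ UU, HasDerivAt (f1 i) (f2 i t) t)
    (h3 : ∀ i, ∀ t ∈ UU, HasDerivAt (f2 i) (f3 i t) t) (hU : UB 2 f3) :
    ∃ M : ℝ, 0 ≤ M ∧ ∀ i, ∀ a ∈ Set.Icc (0:ℝ) (1/2),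
      |f i a - f i (-a) - 2 * a * f1 i 0 - a ^ 3 / 3 * f3 i 0| ≤ M * a ^ 5 := by
  obtain ⟨_, f4, h4, _, f5, h5, hU5⟩ := hU
  obtain ⟨M, hM⟩ := hU5.bdd
  have key : ∀ {t : ℝ}, t ∈ Set.Icc (0:ℝ) (1/2) → t ∈ UU ∧ -t ∈ UU := by
    intro t ht
    obtain ⟨h1, h2⟩ := ht
    exact ⟨⟨by linarith, by linarith⟩, ⟨by linarith, by linarith⟩⟩
  have ng : ∀ {g g' : ℝ → ℝ} {t : ℝ}, (∀ t ∈ UU, HasDerivAt g (g' t) t) → -t ∈ UU →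
      HasDerivAt (fun t => g (-t)) (-(g' (-t))) t := by
    intro g g' t hg ht
    refine ((hg _ ht).comp t (hasDerivAt_neg t)).congr_deriv ?_
    ring
  refine ⟨2 * |M|, by positivity, fun i => ?_⟩
  have e5 : ∀ t ∈ Set.Icc (0:ℝ) (1/2), |f5 i t + f5 i (-t)| ≤ (2 * |M|) * t ^ 0 := by
    intro t ht
    obtain ⟨hp, hn⟩ := key ht
    have := hM i t hp
    have := hM i _ hn
    have := abs_add_le (f5 i t) (f5 i (-t))
    have := le_abs_self M
    rw [pow_zero]
    linarith
  have e4 := taylor_step (D := fun t => f4 i t - f4 i (-t)) (n := 0) (fun t ht => by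
    refine ((h5 i t (key ht).1).sub (ng (h5 i) (key ht).2)).congr_deriv ?_
    ring) (by simp) (by positivity : 0 ≤ 2 * |M|) e5
  have e3 := taylor_step (D := fun t => f3 i t + f3 i (-t) - 2 * f3 i 0) (fun t ht => by
    refine (((h4 i t (key ht).1).add (ng (h4 i) (key ht).2)).sub_const _).congr_deriv ?_
    ring) (by simp; ring) (by positivity : 0 ≤ 2 * |M|) e4
  have e2 := taylor_step (D := fun t => f2 i t - f2 i (-t) - 2 * f3 i 0 * t) (fun t ht => by
    refine (((h3 i t (key ht).1).sub (ng (h3 i) (key ht).2)).sub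
      ((hasDerivAt_id t).const_mul _)).congr_deriv ?_
    ring) (by simp) (by positivity : 0 ≤ 2 * |M|) e3
  have e1 := taylor_step (D := fun t => f1 i t + f1 i (-t) - 2 * f1 i 0 - f3 i 0 * t ^ 2)
    (fun t ht => by
    refine ((((h2 i t (key ht).1).add (ng (h2 i) (key ht).2)).sub_const _).sub
      ((hasDerivAt_pow 2 t).const_mul _)).congr_deriv ?_
    push_cast
    ring) (by simp; ring) (by positivity : 0 ≤ 2 * |M|) e2
  have e0 := taylor_step (D := fun t => f i t - f i (-t) - 2 * f1 i 0 * t - f3 i 0 / 3 * t ^ 3)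
    (fun t ht => by
    refine ((((h1 i t (key ht).1).sub (ng (h1 i) (key ht).2)).sub
      ((hasDerivAt_id t).const_mul _)).sub
      ((hasDerivAt_pow 3 t).const_mul _)).congr_deriv ?_
    push_cast
    ring) (by simp) (by positivity : 0 ≤ 2 * |M|) e1
  intro a ha
  have := e0 a ha
  convert this using 2
  ring

lemma contDiff_sinc (n : ℕ) : ContDiff ℝ n Real.sinc := by
  have h : Differentiable ℂ (dslope Complex.sin 0) := by
    rw [← differentiableOn_univ, Complex.differentiableOn_dslope Filter.univ_mem]
    exact Complex.differentiable_sin.differentiableOn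
  have h2 : ContDiff ℂ n (dslope Complex.sin 0) := h.contDiff
  have h3 := h2.real_of_complex
  have : Real.sinc = fun x : ℝ => (dslope Complex.sin 0 (x : ℂ)).re := by
    funext x
    by_cases hx : x = 0
    · subst hx
      simp [Complex.deriv_sin]
    · rw [Real.sinc_of_ne_zero hx, dslope_of_ne _ (by exact_mod_cast hx), slope_def_field]
      simp only [Complex.sin_zero, sub_zero]
      rw [← Complex.ofReal_sin, ← Complex.ofReal_div, Complex.ofReal_re]
  rw [this]
  exact h3

lemma mul_sinc (x : ℝ) : x * Real.sinc x = Real.sin x := by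
  by_cases hx : x = 0
  · simp [hx]
  · rw [Real.sinc_of_ne_zero hx]
    field_simp

lemma cos_eq_sinc (x : ℝ) : Real.cos x = Real.sinc x + x * deriv Real.sinc x := by
  have h1 : HasDerivAt Real.sinc (deriv Real.sinc x) x :=
    ((contDiff_sinc 1).differentiable (by simp) x).hasDerivAt
  have h2 := (hasDerivAt_id x).mul h1
  have h3 : HasDerivAt (fun x => x * Real.sinc x) (Real.cos x) x := by
    simp_rw [mul_sinc]
    exact Real.hasDerivAt_sin x
  have := h3.unique h2
  simpa using this

lemma sinc_pos {x : ℝ} (hx : |x| < π) : 0 < Real.sinc x := by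
  by_cases h0 : x = 0
  · simp [h0]
  have : ∀ y, 0 < y → y < π → 0 < Real.sinc y := fun y h1 h2 => by
    rw [Real.sinc_of_ne_zero h1.ne']
    exact div_pos (Real.sin_pos_of_pos_of_lt_pi h1 h2) h1
  obtain ⟨h1, h2⟩ := abs_lt.1 hx
  rcases lt_or_gt_of_ne h0 with h | h
  · rw [← Real.sinc_neg]
    exact this _ (by linarith) (by linarith)
  · exact this _ h h2

noncomputable def cc (x : ℝ) : ℝ := deriv Real.sinc x * (Real.sinc x)⁻¹

lemma cot_eq_cc {x : ℝ} (hx : |x| < π) (h0 : x ≠ 0) : Real.cot x = x⁻¹ + cc x := by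
  have := sinc_pos hx
  rw [Real.cot_eq_cos_div_sin, cos_eq_sinc, ← mul_sinc, cc]
  field_simp

lemma cc_zero : cc 0 = 0 := by
  have h : deriv Real.sinc 0 = 0 := by
    have h1 : HasDerivAt Real.sinc (deriv Real.sinc 0) 0 :=
      ((contDiff_sinc 1).differentiable (by simp) 0).hasDerivAt
    have h2 : HasDerivAt (fun x => Real.sinc (-x)) (-(deriv Real.sinc 0)) 0 := by
      have h1' : HasDerivAt Real.sinc (deriv Real.sinc 0) (-0) := by simpa using h1
      refine (h1'.comp 0 (hasDerivAt_neg 0)).congr_deriv ?_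
      ring
    simp_rw [Real.sinc_neg] at h2
    have := h1.unique h2
    linarith
  simp [cc, h]

lemma UB.cc {ι : Type*} {n : ℕ} {F : ι → ℝ → ℝ} (hF : UB n F) {ρ : ℝ} (hρ : ρ < π)
    (hb : ∀ i, ∀ t ∈ UU, |F i t| ≤ ρ) : UB n (fun i t => cc (F i t)) := by
  have hd : ContDiff ℝ n (deriv Real.sinc) :=
    ((contDiff_succ_iff_deriv (n := n)).1 (by exact_mod_cast contDiff_sinc (n+1))).2.2
  refine (hF.comp hd).mul ?_
  by_cases hne : (Set.Icc (-ρ) ρ).Nonempty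
  · obtain ⟨x0, hx0, hmin⟩ := (isCompact_Icc (a := -ρ) (b := ρ)).exists_isMinOn hne
      Real.continuous_sinc.continuousOn
    refine (hF.comp (contDiff_sinc n)).inv (m := Real.sinc x0)
      (sinc_pos ((abs_le.2 hx0).trans_lt hρ)) fun i t ht => ?_
    exact (hmin (abs_le.1 (hb i t ht))).trans (le_abs_self _)
  · refine (hF.comp (contDiff_sinc n)).inv (m := 1) one_pos fun i t ht => ?_
    exact absurd ⟨_, abs_le.1 (hb i t ht)⟩ hne

lemma trap_cell {f f1 f2 f3 f4 : ℝ → ℝ} (h1 : ∀ t, HasDerivAt f (f1 t) t)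
    (h2 : ∀ t, HasDerivAt f1 (f2 t) t) (h3 : ∀ t, HasDerivAt f2 (f3 t) t)
    (h4 : ∀ t, HasDerivAt f3 (f4 t) t) (hc : Continuous f4) {M : ℝ} (hM : ∀ t, |f4 t| ≤ M)
    {a : ℝ} (ha : 0 ≤ a) (x : ℝ) :
    |(∫ t in x..(x+a), f t) - a * (f x + f (x+a)) / 2 + a ^ 2 / 12 * (f1 (x+a) - f1 x)|
      ≤ M * a ^ 5 := by
  have hfc : Continuous f := continuous_iff_continuousAt.2 fun t => (h1 t).continuousAt
  let p : ℝ → ℝ := fun t => (t - x) ^ 2 * (x + a - t) ^ 2 / 24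
  have hp : Continuous p := by fun_prop
  have key := intervalIntegral.integral_eq_sub_of_hasDerivAt (a := x) (b := x + a)
    (f := fun t => (t - x) ^ 2 * (x + a - t) ^ 2 / 24 * f3 t
      - ((t - x) * (x + a - t) * (x + a - t - (t - x)) / 12) * f2 t
      + ((a ^ 2 - 6 * (t - x) * (x + a - t)) / 12) * f1 t
      - ((2 * t - 2 * x - a) / 2) * f t)
    (f' := fun t => p t * f4 t - f t) ?_ ?_
  · rw [intervalIntegral.integral_sub
      ((show Continuous (fun t => p t * f4 t) from hp.mul hc).intervalIntegrable _ _)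
      (hfc.intervalIntegrable _ _)] at key
    have e : (∫ t in x..(x+a), f t) - a * (f x + f (x+a)) / 2 + a ^ 2 / 12 * (f1 (x+a) - f1 x)
        = ∫ t in x..(x+a), p t * f4 t := by
      have := key
      ring_nf at this ⊢
      linarith
    rw [e]
    have := intervalIntegral.norm_integral_le_of_norm_le_const (a := x) (b := x + a)
      (C := M * a ^ 4) (f := fun t => p t * f4 t) ?_
    · rw [Real.norm_eq_abs, add_sub_cancel_left, abs_of_nonneg ha] at this
      linarith [this, show M * a ^ 4 * a = M * a ^ 5 by ring]
    · intro t ht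
      rw [Set.uIoc_of_le (by linarith)] at ht
      have hM' := hM t
      have b1 : 0 ≤ t - x := by linarith [ht.1]
      have b2 : 0 ≤ x + a - t := by linarith [ht.2]
      have b3 : (t - x) ^ 2 ≤ a ^ 2 := by gcongr; linarith
      have b4 : (x + a - t) ^ 2 ≤ a ^ 2 := by gcongr; linarith
      have b5 : (t - x) ^ 2 * (x + a - t) ^ 2 ≤ a ^ 2 * a ^ 2 := by gcongr
      have b6 : |p t| ≤ a ^ 4 := by
        rw [abs_of_nonneg (by positivity)]
        simp only [p]
        nlinarith [sq_nonneg (a^2)]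
      rw [Real.norm_eq_abs, abs_mul, mul_comm]
      gcongr
      exact (abs_nonneg _).trans hM'
  · intro t _
    have c1 : HasDerivAt (fun t : ℝ => (t - x) ^ 2 * (x + a - t) ^ 2 / 24)
        ((t - x) * (x + a - t) * (x + a - t - (t - x)) / 12) t := by
      have u : HasDerivAt (fun t : ℝ => t - x) 1 t := (hasDerivAt_id t).sub_const x
      have v : HasDerivAt (fun t : ℝ => x + a - t) (-1) t := (hasDerivAt_id t).const_sub (x + a)
      refine (((u.pow 2).mul (v.pow 2)).div_const 24).congr_deriv ?_
      simp
      ring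
    have c2 : HasDerivAt (fun t : ℝ => (t - x) * (x + a - t) * (x + a - t - (t - x)) / 12)
        ((a ^ 2 - 6 * (t - x) * (x + a - t)) / 12) t := by
      have u : HasDerivAt (fun t : ℝ => t - x) 1 t := (hasDerivAt_id t).sub_const x
      have v : HasDerivAt (fun t : ℝ => x + a - t) (-1) t := (hasDerivAt_id t).const_sub (x + a)
      refine (((u.mul v).mul (v.sub u)).div_const 12).congr_deriv ?_
      simp
      ring
    have c3 : HasDerivAt (fun t : ℝ => (a ^ 2 - 6 * (t - x) * (x + a - t)) / 12)
        ((2 * t - 2 * x - a) / 2) t := by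
      have u : HasDerivAt (fun t : ℝ => t - x) 1 t := (hasDerivAt_id t).sub_const x
      have v : HasDerivAt (fun t : ℝ => x + a - t) (-1) t := (hasDerivAt_id t).const_sub (x + a)
      refine ((((u.const_mul 6).mul v).const_sub (a ^ 2)).div_const 12).congr_deriv ?_
      ring
    have c4 : HasDerivAt (fun t : ℝ => (2 * t - 2 * x - a) / 2) 1 t := by
      refine (((((hasDerivAt_id t).const_mul 2).sub_const (2 * x)).sub_const a).div_const
        2).congr_deriv ?_
      norm_num
    refine ((((c1.mul (h4 t)).sub (c2.mul (h3 t))).add (c3.mul (h2 t))).sub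
      (c4.mul (h1 t))).congr_deriv ?_
    simp only [p]
    ring
  · exact ((hp.mul hc).sub hfc).intervalIntegrable _ _

lemma trap_periodic {f : ℝ → ℝ} (hf : ContDiff ℝ 4 f) (hper : ∀ t, f (t + 1) = f t) {M : ℝ}
    (hM : ∀ t, |iteratedDeriv 4 f t| ≤ M) (N : ℕ) (hN : 0 < N) :
    |(N:ℝ)⁻¹ * ∑ j ∈ Finset.range N, f (j * (N:ℝ)⁻¹) - ∫ t in (0:ℝ)..1, f t|
      ≤ M * (N:ℝ)⁻¹ ^ 4 := by
  have hd : ∀ k : ℕ, k < 4 → ∀ t,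
      HasDerivAt (iteratedDeriv k f) (iteratedDeriv (k+1) f t) t := by
    intro k hk t
    rw [iteratedDeriv_succ]
    exact (hf.differentiable_iteratedDeriv k (by exact_mod_cast hk) t).hasDerivAt
  have hN0 : (N:ℝ) ≠ 0 := by positivity
  set a : ℝ := (N:ℝ)⁻¹ with ha
  have ha0 : 0 ≤ a := by positivity
  have hNa : (N:ℝ) * a = 1 := by simp [ha, hN0]
  have hcont : Continuous f := hf.continuous
  have cell : ∀ x, _ := trap_cell (f := f) (f1 := iteratedDeriv 1 f) (f2 := iteratedDeriv 2 f)
    (f3 := iteratedDeriv 3 f) (f4 := iteratedDeriv 4 f)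
    (fun t => by simpa using hd 0 (by norm_num) t) (hd 1 (by norm_num)) (hd 2 (by norm_num))
    (hd 3 (by norm_num)) (hf.continuous_iteratedDeriv 4 le_rfl) hM ha0
  have per1 : iteratedDeriv 1 f 1 = iteratedDeriv 1 f 0 := by
    have : (fun t => f (t + 1)) = f := funext hper
    have h := congrFun (iteratedDeriv_comp_add_const 1 f 1) 0
    rw [this] at h
    simpa using h.symm
  have sumI : ∑ j ∈ Finset.range N, ∫ t in ((j:ℝ) * a)..((j:ℝ) * a + a), f t
      = ∫ t in (0:ℝ)..1, f t := by
    have := intervalIntegral.sum_integral_adjacent_intervals (f := f) (μ := volume)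
      (a := fun j : ℕ => (j:ℝ) * a) (n := N) (fun k _ => hcont.intervalIntegrable _ _)
    simp only [Nat.cast_zero, zero_mul, hNa] at this
    rw [← this]
    refine Finset.sum_congr rfl fun j _ => ?_
    push_cast
    ring_nf
  have tele : ∀ g : ℝ → ℝ, ∑ j ∈ Finset.range N, (g ((j:ℝ) * a + a) - g ((j:ℝ) * a)) = g 1 - g 0 := by
    intro g
    have := Finset.sum_range_sub (fun j : ℕ => g ((j:ℝ) * a)) N
    simp only [Nat.cast_zero, zero_mul, hNa] at this
    rw [← this]
    refine Finset.sum_congr rfl fun j _ => ?_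
    push_cast
    ring_nf
  have tot : ∑ j ∈ Finset.range N, ((∫ t in ((j:ℝ)*a)..((j:ℝ)*a+a), f t)
      - a * (f ((j:ℝ)*a) + f ((j:ℝ)*a+a)) / 2
      + a ^ 2 / 12 * (iteratedDeriv 1 f ((j:ℝ)*a+a) - iteratedDeriv 1 f ((j:ℝ)*a)))
      = (∫ t in (0:ℝ)..1, f t) - a * ∑ j ∈ Finset.range N, f (j * a) := by
    rw [Finset.sum_add_distrib, Finset.sum_sub_distrib, sumI, ← Finset.mul_sum, tele, per1]
    have e : ∑ j ∈ Finset.range N, a * (f ((j:ℝ)*a) + f ((j:ℝ)*a+a)) / 2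
        = a * ∑ j ∈ Finset.range N, f (j * a)
          + a / 2 * ∑ j ∈ Finset.range N, (f ((j:ℝ) * a + a) - f ((j:ℝ) * a)) := by
      rw [Finset.mul_sum, Finset.mul_sum, ← Finset.sum_add_distrib]
      refine Finset.sum_congr rfl fun j _ => ?_
      ring
    rw [e, tele]
    have := hper 0
    rw [zero_add] at this
    rw [this]
    ring
  rw [abs_sub_comm, ← tot]
  refine (Finset.abs_sum_le_sum_abs _ _).trans ?_
  refine (Finset.sum_le_sum fun (j : ℕ) _ => cell ((j:ℝ)*a)).trans ?_
  rw [Finset.sum_const, Finset.card_range, nsmul_eq_mul]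
  apply le_of_eq
  calc (N:ℝ) * (M * a ^ 5) = (N * a) * (M * a ^ 4) := by ring
    _ = _ := by rw [hNa, one_mul]

lemma sum_Ico_periodic {f : ℤ → ℝ} (N : ℕ) (hf : ∀ j, f (j + N) = f j) (k : ℤ) :
    ∑ j ∈ Finset.Ico k (k + N), f j = ∑ j ∈ Finset.range N, f j := by
  have e : ∀ k : ℤ, ∑ j ∈ Finset.Ico k (k + N), f j = ∑ j ∈ Finset.range N, f (k + j) := by
    intro k
    rw [Int.Ico_eq_finset_map, Finset.sum_map]
    simp
  have step : ∀ k : ℤ, ∑ j ∈ Finset.range N, f (k + 1 + j) = ∑ j ∈ Finset.range N, f (k + j) := by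
    intro k
    have := Finset.sum_range_sub (fun j : ℕ => f (k + j)) N
    rw [Finset.sum_sub_distrib, hf] at this
    simp only [Nat.cast_zero, add_zero, sub_self] at this
    rw [← sub_eq_zero, ← this]
    congr 1
    refine Finset.sum_congr rfl fun j _ => ?_
    push_cast
    ring_nf
  rw [e]
  induction k using Int.induction_on with
  | zero => simp
  | succ i ih => rw [step, ih]
  | pred i ih => rw [← step, ← ih]; simp

lemma sum_odd_periodic {f : ℤ → ℝ} (N : ℕ) (hf : ∀ j, f (j + N) = f j) (ho : ∀ j, f (-j) = - f j) :
    ∑ j ∈ Finset.range N, f j = 0 := by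
  have h1 := Finset.sum_range_reflect (fun j : ℕ => f j) N
  have h2 : ∑ j ∈ Finset.range N, f ((N - 1 - j : ℕ) : ℤ) = ∑ j ∈ Finset.range N, - f ((j:ℤ) + 1) := by
    refine Finset.sum_congr rfl fun j hj => ?_
    have : ((N - 1 - j : ℕ) : ℤ) = -((j:ℤ) + 1) + N := by
      have := Finset.mem_range.1 hj
      omega
    rw [this, hf, ho]
  rw [h2, Finset.sum_neg_distrib] at h1
  have h3 := Finset.sum_range_sub (fun j : ℕ => f j) N
  rw [Finset.sum_sub_distrib] at h3
  have h4 := hf 0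
  simp only [zero_add] at h4
  push_cast at h3
  rw [h4, sub_self] at h3
  linarith

structure Adm (L m₁ m₂ : ℝ) (g : ℝ → ℝ) : Prop where
  cd : ContDiff ℝ 6 g
  zero : g 0 = 0
  per : ∀ t, g (t + 1) = g t - L
  der : ∀ t, deriv g t ≤ -m₁
  bd : ∀ k : ℕ, 1 ≤ k → k ≤ 6 → ∀ t, |iteratedDeriv k g t| ≤ m₂

abbrev AI (L m₁ m₂ : ℝ) := {g : ℝ → ℝ // Adm L m₁ m₂ g}

section main
variable {L m₁ m₂ : ℝ}

lemma Adm.hasDeriv {g : ℝ → ℝ} (h : Adm L m₁ m₂ g) (k : ℕ) (hk : k < 6) (t : ℝ) :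
    HasDerivAt (iteratedDeriv k g) (iteratedDeriv (k+1) g t) t := by
  rw [iteratedDeriv_succ]
  exact (h.cd.differentiable_iteratedDeriv k (by exact_mod_cast hk) t).hasDerivAt

lemma UB_g (n k : ℕ) (hk : 1 ≤ k) (hkn : k + n ≤ 6) :
    UB n (fun (i : AI L m₁ m₂) => iteratedDeriv k i.1) := by
  induction n generalizing k with
  | zero =>
    exact ⟨⟨m₂, fun i t _ => i.2.bd k hk hkn t⟩, fun i =>
      (i.2.cd.continuous_iteratedDeriv k (by exact_mod_cast hkn)).continuousOn⟩
  | succ n ih =>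
    exact ⟨⟨m₂, fun i t _ => i.2.bd k hk (by omega) t⟩, _,
      fun i t _ => i.2.hasDeriv k (by omega) t, ih (k+1) (by omega) (by omega)⟩

noncomputable def hh (k : ℕ) (i : AI L m₁ m₂) (t : ℝ) : ℝ := avg k (iteratedDeriv (k+1) i.1) t

lemma UB_hh (n k : ℕ) (hkn : k + n ≤ 5) : UB n (fun (i : AI L m₁ m₂) => hh k i) :=
  (UB_g n (k+1) (by omega) (by omega)).avg k

lemma hh_deriv (k : ℕ) (hk : k ≤ 4) (i : AI L m₁ m₂) {t : ℝ} (ht : t ∈ UU) :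
    HasDerivAt (hh k i) (hh (k+1) i t) t :=
  avg_hasDeriv (fun t _ => i.2.hasDeriv (k+1) (by omega) t)
    (i.2.cd.continuous_iteratedDeriv (k+2) (by exact_mod_cast (by omega : k + 2 ≤ 6))).continuousOn
    (fun t _ => i.2.bd (k+2) (by omega) (by omega) t) k ht

lemma hh_zero (k : ℕ) (i : AI L m₁ m₂) : hh k i 0 = iteratedDeriv (k+1) i.1 0 / (k+1) :=
  avg_zero _ _

lemma g_eq (i : AI L m₁ m₂) {t : ℝ} (ht : t ∈ UU) : i.1 t = t * hh 0 i t := by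
  have := avg_eq (f := i.1) (f' := iteratedDeriv 1 i.1)
    (fun t _ => by simpa using i.2.hasDeriv 0 (by norm_num) t)
    (i.2.cd.continuous_iteratedDeriv 1 (by norm_num)).continuousOn ht
  rw [i.2.zero, sub_zero] at this
  exact this

lemma hh_le (i : AI L m₁ m₂) {t : ℝ} (ht : t ∈ UU) : hh 0 i t ≤ -m₁ := by
  have h1 : ContinuousOn (fun s => s ^ 0 * iteratedDeriv 1 i.1 (s * t)) (Set.uIcc (0:ℝ) 1) :=
    avg_contOn (i.2.cd.continuous_iteratedDeriv 1 (by norm_num)).continuousOn 0 ht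
  have := intervalIntegral.integral_mono_on (zero_le_one (α := ℝ)) (μ := volume) h1.intervalIntegrable
    (intervalIntegrable_const (c := -m₁)) (fun s _ => by
      simpa using i.2.der (s * t))
  simpa [hh, avg] using this

lemma g_anti (i : AI L m₁ m₂) : Antitone (fun t => i.1 t + m₁ * t) := by
  have hd : ∀ t, HasDerivAt (fun t => i.1 t + m₁ * t) (deriv i.1 t + m₁) t := by
    intro t
    have h1 : HasDerivAt i.1 (deriv i.1 t) t :=
      (i.2.cd.differentiable (by norm_num) t).hasDerivAt
    refine (h1.add ((hasDerivAt_id t).const_mul m₁)).congr_deriv ?_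
    ring
  refine antitone_of_deriv_nonpos (fun t => (hd t).differentiableAt) fun t => ?_
  rw [(hd t).deriv]
  linarith [i.2.der t]

lemma g_one (i : AI L m₁ m₂) : i.1 1 = -L := by
  have := i.2.per 0
  rw [zero_add, i.2.zero] at this
  linarith

lemma g_negone (i : AI L m₁ m₂) : i.1 (-1) = L := by
  have := i.2.per (-1)
  rw [neg_add_cancel, i.2.zero] at this
  linarith

lemma g_bound (hm₁ : 0 < m₁) (i : AI L m₁ m₂) {t : ℝ} (ht : t ∈ UU) : |i.1 t| ≤ L - m₁ / 4 := by
  obtain ⟨h1, h2⟩ := ht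
  have a := g_anti i
  have z := i.2.zero
  have o := g_one i
  have no := g_negone i
  have e1 := a (show (-1:ℝ) ≤ t by linarith)
  have e2 := a (show t ≤ (1:ℝ) by linarith)
  simp only at e1 e2
  have := a (show (0:ℝ) ≤ 1 by norm_num)
  simp only at this
  rw [abs_le]
  constructor
  · nlinarith
  · nlinarith

lemma g_pos (hm₁ : 0 < m₁) (i : AI L m₁ m₂) {t : ℝ} (h0 : 0 < t) (h1 : t < 1) :
    i.1 t < 0 ∧ -L < i.1 t := by
  have a := g_anti i
  have z := i.2.zero
  have o := g_one i
  have e1 := a h0.le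
  have e2 := a h1.le
  simp only at e1 e2
  constructor <;> nlinarith

noncomputable def qq (i : AI L m₁ m₂) (t : ℝ) : ℝ := (hh 0 i t)⁻¹
noncomputable def qq1 (i : AI L m₁ m₂) (t : ℝ) : ℝ := -hh 1 i t * qq i t ^ 2
noncomputable def qq2 (i : AI L m₁ m₂) (t : ℝ) : ℝ :=
  -hh 2 i t * qq i t ^ 2 + 2 * hh 1 i t ^ 2 * qq i t ^ 3
noncomputable def qq3 (i : AI L m₁ m₂) (t : ℝ) : ℝ :=
  -hh 3 i t * qq i t ^ 2 + 6 * hh 1 i t * hh 2 i t * qq i t ^ 3 - 6 * hh 1 i t ^ 3 * qq i t ^ 4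
noncomputable def pp (i : AI L m₁ m₂) (t : ℝ) : ℝ := qq i t ^ 3
noncomputable def pp1 (i : AI L m₁ m₂) (t : ℝ) : ℝ := -3 * hh 1 i t * qq i t ^ 4
noncomputable def pp2 (i : AI L m₁ m₂) (t : ℝ) : ℝ :=
  -3 * hh 2 i t * qq i t ^ 4 + 12 * hh 1 i t ^ 2 * qq i t ^ 5
noncomputable def pp3 (i : AI L m₁ m₂) (t : ℝ) : ℝ :=
  -3 * hh 3 i t * qq i t ^ 4 + 36 * hh 1 i t * hh 2 i t * qq i t ^ 5
    - 60 * hh 1 i t ^ 3 * qq i t ^ 6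

lemma UB_qq (hm₁ : 0 < m₁) (n : ℕ) (hn : n ≤ 5) : UB n (fun i : AI L m₁ m₂ => qq i) :=
  (UB_hh n 0 (by omega)).inv hm₁ fun i t ht => by
    have := hh_le i ht
    rw [abs_of_nonpos (by linarith)]
    linarith

lemma UB_qq1 (hm₁ : 0 < m₁) : UB 4 (fun i : AI L m₁ m₂ => qq1 i) :=
  (UB_hh 4 1 (by omega)).neg.mul ((UB_qq hm₁ 4 (by omega)).pow 2)

lemma UB_qq3 (hm₁ : 0 < m₁) : UB 2 (fun i : AI L m₁ m₂ => qq3 i) := by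
  have q := UB_qq (L := L) (m₂ := m₂) hm₁ 2 (by omega)
  have h1 := UB_hh (L := L) (m₁ := m₁) (m₂ := m₂) 2 1 (by omega)
  have h2 := UB_hh (L := L) (m₁ := m₁) (m₂ := m₂) 2 2 (by omega)
  have h3 := UB_hh (L := L) (m₁ := m₁) (m₂ := m₂) 2 3 (by omega)
  exact ((h3.neg.mul (q.pow 2)).add (((h1.cmul 6).mul h2).mul (q.pow 3))).sub
    (((h1.pow 3).cmul 6).mul (q.pow 4))

lemma UB_pp3 (hm₁ : 0 < m₁) : UB 2 (fun i : AI L m₁ m₂ => pp3 i) := by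
  have q := UB_qq (L := L) (m₂ := m₂) hm₁ 2 (by omega)
  have h1 := UB_hh (L := L) (m₁ := m₁) (m₂ := m₂) 2 1 (by omega)
  have h2 := UB_hh (L := L) (m₁ := m₁) (m₂ := m₂) 2 2 (by omega)
  have h3 := UB_hh (L := L) (m₁ := m₁) (m₂ := m₂) 2 3 (by omega)
  exact (((h3.cmul (-3)).mul (q.pow 4)).add (((h1.cmul 36).mul h2).mul (q.pow 5))).sub
    (((h1.pow 3).cmul 60).mul (q.pow 6))

lemma qq_deriv (hm₁ : 0 < m₁) (i : AI L m₁ m₂) {t : ℝ} (ht : t ∈ UU) :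
    HasDerivAt (qq i) (qq1 i t) t := by
  have := hh_le i ht
  refine ((hh_deriv 0 (by norm_num) i ht).inv (by linarith)).congr_deriv ?_
  rw [qq1, qq, inv_pow, div_eq_mul_inv]

lemma qq1_deriv (hm₁ : 0 < m₁) (i : AI L m₁ m₂) {t : ℝ} (ht : t ∈ UU) :
    HasDerivAt (qq1 i) (qq2 i t) t := by
  have q := qq_deriv hm₁ i ht
  have h1 := hh_deriv 1 (by norm_num) i ht
  refine (h1.neg.mul (q.pow 2)).congr_deriv ?_
  simp [qq2, qq1]
  ring

lemma qq2_deriv (hm₁ : 0 < m₁) (i : AI L m₁ m₂) {t : ℝ} (ht : t ∈ UU) :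
    HasDerivAt (qq2 i) (qq3 i t) t := by
  have q := qq_deriv hm₁ i ht
  have h1 := hh_deriv 1 (by norm_num) i ht
  have h2 := hh_deriv 2 (by norm_num) i ht
  refine ((h2.neg.mul (q.pow 2)).add (((h1.pow 2).const_mul 2).mul (q.pow 3))).congr_deriv ?_
  simp [qq3, qq1]
  ring

lemma pp_deriv (hm₁ : 0 < m₁) (i : AI L m₁ m₂) {t : ℝ} (ht : t ∈ UU) :
    HasDerivAt (pp i) (pp1 i t) t := by
  have q := qq_deriv hm₁ i ht
  refine (q.pow 3).congr_deriv ?_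
  simp [pp1, qq1]
  ring

lemma pp1_deriv (hm₁ : 0 < m₁) (i : AI L m₁ m₂) {t : ℝ} (ht : t ∈ UU) :
    HasDerivAt (pp1 i) (pp2 i t) t := by
  have q := qq_deriv hm₁ i ht
  have h1 := hh_deriv 1 (by norm_num) i ht
  refine ((h1.const_mul (-3)).mul (q.pow 4)).congr_deriv ?_
  simp [pp2, qq1]
  ring

lemma pp2_deriv (hm₁ : 0 < m₁) (i : AI L m₁ m₂) {t : ℝ} (ht : t ∈ UU) :
    HasDerivAt (pp2 i) (pp3 i t) t := by
  have q := qq_deriv hm₁ i ht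
  have h1 := hh_deriv 1 (by norm_num) i ht
  have h2 := hh_deriv 2 (by norm_num) i ht
  refine (((h2.const_mul (-3)).mul (q.pow 4)).add
    (((h1.pow 2).const_mul 12).mul (q.pow 5))).congr_deriv ?_
  simp [pp3, qq1]
  ring

noncomputable def Kloc (i : AI L m₁ m₂) (t : ℝ) : ℝ :=
  L / π * avg 0 (qq1 i) t + cc (π / L * i.1 t) - L * qq i 0 * cc (π * t)

lemma zero_mem_UU : (0:ℝ) ∈ UU := by constructor <;> norm_num

lemma UB_Kloc (hL : 0 < L) (hm₁ : 0 < m₁) : UB 4 (fun i : AI L m₁ m₂ => Kloc i) := by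
  have hg : UB 4 (fun i : AI L m₁ m₂ => i.1) :=
    ((UB.id 4).mul (UB_hh 4 0 (by omega))).congr fun i t ht => (g_eq i ht).symm
  have hπ := Real.pi_pos
  refine ((((UB_qq1 hm₁).avg 0).cmul (L / π)).add ((hg.cmul (π / L)).cc
    (ρ := π / L * (L - m₁ / 4)) ?_ ?_)).sub ((UB.const 4 (fun i : AI L m₁ m₂ => L * qq i 0) ?_).mul
    (((UB.id 4).cmul π).cc (ρ := π * (3 / 4)) ?_ ?_))
  · rw [div_mul_eq_mul_div, div_lt_iff₀ hL]
    nlinarith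
  · intro i t ht
    rw [abs_mul, abs_of_pos (by positivity)]
    have := g_bound hm₁ i ht
    gcongr
  · obtain ⟨M, hM⟩ := (UB_qq (L := L) (m₂ := m₂) hm₁ 0 (by omega)).bdd
    refine ⟨L * M, fun i => ?_⟩
    rw [abs_mul, abs_of_pos hL]
    have := hM i 0 zero_mem_UU
    gcongr
  · linarith
  · intro i t ht
    rw [abs_mul, abs_of_pos hπ]
    have : |t| ≤ 3/4 := abs_le.2 ⟨ht.1.le, ht.2.le⟩
    gcongr

open Classical in
noncomputable def KK (i : AI L m₁ m₂) (t : ℝ) : ℝ :=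
  Real.cot (π * i.1 t / L) - L * qq i 0 * Real.cot (π * t) +
    if ∃ n : ℤ, t = n then L / π * qq1 i 0 else 0

lemma cot_add_pi (x : ℝ) : Real.cot (x + π) = Real.cot x := by
  rw [Real.cot_eq_cos_div_sin, Real.cot_eq_cos_div_sin, Real.cos_add_pi, Real.sin_add_pi,
    neg_div_neg_eq]

lemma cot_neg' (x : ℝ) : Real.cot (-x) = -Real.cot x := by
  rw [Real.cot_eq_cos_div_sin, Real.cot_eq_cos_div_sin, Real.cos_neg, Real.sin_neg, div_neg]

lemma cot_zero' : Real.cot 0 = 0 := by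
  rw [Real.cot_eq_cos_div_sin]; simp

lemma F_per (hL : 0 < L) (i : AI L m₁ m₂) (t : ℝ) :
    Real.cot (π * i.1 (t + 1) / L) = Real.cot (π * i.1 t / L) := by
  rw [i.2.per, ← cot_add_pi (π * (i.1 t - L) / L)]
  congr 1
  field_simp
  ring

lemma KK_per (hL : 0 < L) (i : AI L m₁ m₂) (t : ℝ) : KK i (t + 1) = KK i t := by
  unfold KK
  rw [F_per hL, mul_add, mul_one, cot_add_pi]
  have : (∃ n : ℤ, t + 1 = n) ↔ ∃ n : ℤ, t = n := by
    constructor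
    · rintro ⟨n, hn⟩
      exact ⟨n - 1, by push_cast; linarith⟩
    · rintro ⟨n, hn⟩
      exact ⟨n + 1, by push_cast; linarith⟩
  by_cases h : ∃ n : ℤ, t = n
  · rw [if_pos h, if_pos (this.2 h)]
  · rw [if_neg h, if_neg (fun h' => h (this.1 h'))]

lemma KK_per_int (hL : 0 < L) (i : AI L m₁ m₂) (t : ℝ) (n : ℤ) : KK i (t - n) = KK i t := by
  have : Function.Periodic (KK i) 1 := KK_per hL i
  simpa using this.sub_int_mul_eq n (x := t)

lemma not_int {t : ℝ} (h0 : t ≠ 0) (h1 : |t| < 1) : ¬ ∃ n : ℤ, t = n := by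
  rintro ⟨n, rfl⟩
  have : |n| < 1 := by exact_mod_cast h1
  rw [Int.abs_lt_one_iff] at this
  exact h0 (by simp [this])

lemma KK_zero (i : AI L m₁ m₂) : KK i 0 = L / π * qq1 i 0 := by
  unfold KK
  rw [if_pos ⟨0, by simp⟩, i.2.zero]
  simp [cot_zero']

lemma KK_loc (hL : 0 < L) (hm₁ : 0 < m₁) (i : AI L m₁ m₂) {t : ℝ} (ht : t ∈ UU) :
    KK i t = Kloc i t := by
  have hπ := Real.pi_pos
  by_cases h0 : t = 0
  · subst h0
    rw [KK_zero, Kloc, i.2.zero, avg_zero]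
    simp [cc_zero]
  have ht1 : |t| < 3/4 := abs_lt.2 ht
  have hq := avg_eq (fun t ht => qq_deriv hm₁ i ht) ((UB_qq1 hm₁).cont i) ht
  have hh0 := hh_le i ht
  have hh1 := hh_le i zero_mem_UU
  rw [KK, if_neg (not_int h0 (by linarith)), Kloc, cot_eq_cc (x := π * t), mul_div_right_comm,
    cot_eq_cc (x := π / L * i.1 t)]
  · have e : avg 0 (qq1 i) t = (qq i t - qq i 0) / t := by
      rw [hq]
      field_simp
    rw [e]
    have e2 : (π / L * i.1 t)⁻¹ = L / π * (qq i t / t) := by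
      rw [g_eq i ht, qq]
      have : hh 0 i t ≠ 0 := by linarith
      field_simp
    rw [e2]
    field_simp
    ring
  · rw [abs_mul, abs_of_pos (by positivity)]
    have := g_bound hm₁ i ht
    calc π / L * |i.1 t| ≤ π / L * (L - m₁ / 4) := by gcongr
      _ < π := by
        rw [div_mul_eq_mul_div, div_lt_iff₀ hL]
        nlinarith
  · rw [g_eq i ht]
    have : hh 0 i t ≠ 0 := by linarith
    positivity
  · rw [abs_mul, abs_of_pos hπ]
    nlinarith
  · positivity

lemma KK_smooth (hL : 0 < L) (hm₁ : 0 < m₁) :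
    (∀ i : AI L m₁ m₂, ContDiff ℝ 4 (KK i)) ∧
    ∃ M : ℝ, 0 ≤ M ∧ ∀ i : AI L m₁ m₂, ∀ t, |iteratedDeriv 4 (KK i) t| ≤ M := by
  obtain ⟨h1, M, hM⟩ := (UB_Kloc (L := L) (m₂ := m₂) hL hm₁).iter
  have hr : ∀ t : ℝ, t - round t ∈ UU := fun t => by
    have := abs_le.1 (abs_sub_round t)
    constructor <;> linarith [this.1, this.2]
  have hev : ∀ (i : AI L m₁ m₂) (t : ℝ), KK i =ᶠ[𝓝 t] fun s => Kloc i (s - round t) := by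
    intro i t
    have : ContinuousAt (fun s : ℝ => s - round t) t := by fun_prop
    filter_upwards [this.preimage_mem_nhds (UU_open.mem_nhds (hr t))] with s hs
    rw [← KK_per_int hL i s (round t)]
    exact KK_loc hL hm₁ i hs
  refine ⟨fun i => contDiff_iff_contDiffAt.2 fun t => ?_, |M|, abs_nonneg _, fun i t => ?_⟩
  · refine ContDiffAt.congr_of_eventuallyEq ?_ (hev i t)
    have h2 : ContDiffAt ℝ 4 (Kloc i) (t - round t) :=
      (h1 i).contDiffAt (UU_open.mem_nhds (hr t))
    exact ContDiffAt.comp t (f := fun s : ℝ => s - round t) h2 (by fun_prop)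
  · rw [(hev i t).iteratedDeriv_eq, iteratedDeriv_comp_sub_const]
    exact (hM i _ (hr t)).trans (le_abs_self _)

lemma sum_F (i : AI L m₁ m₂) (N : ℕ) (hN : 0 < N) :
    ∑ j ∈ Finset.range N, Real.cot (π * i.1 (j * (N:ℝ)⁻¹) / L)
      = ∑ j ∈ Finset.range N, KK i (j * (N:ℝ)⁻¹) - L / π * qq1 i 0 := by
  have hN0 : (N:ℝ) ≠ 0 := by positivity
  have hc : ∑ j ∈ Finset.range N, Real.cot (π * ((j:ℝ) * (N:ℝ)⁻¹)) = 0 := by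
    have := sum_odd_periodic (f := fun j : ℤ => Real.cot (π * ((j:ℝ) * (N:ℝ)⁻¹))) N ?_ ?_
    · simpa using this
    · intro j
      rw [← cot_add_pi (π * ((j:ℝ) * (N:ℝ)⁻¹))]
      congr 1
      push_cast
      field_simp
    · intro j
      rw [← cot_neg']
      congr 1
      push_cast
      ring
  obtain ⟨n, rfl⟩ : ∃ n, N = n + 1 := ⟨N - 1, by omega⟩
  have h1 : ∀ j ∈ Finset.range n, KK i (((j+1:ℕ):ℝ) * ((n+1:ℕ):ℝ)⁻¹) =
      Real.cot (π * i.1 (((j+1:ℕ):ℝ) * ((n+1:ℕ):ℝ)⁻¹) / L)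
        - L * qq i 0 * Real.cot (π * (((j+1:ℕ):ℝ) * ((n+1:ℕ):ℝ)⁻¹)) := by
    intro j hj
    have hj' : ((j+1:ℕ):ℝ) < ((n+1:ℕ):ℝ) := by
      have := Finset.mem_range.1 hj
      exact_mod_cast (by omega : j + 1 < n + 1)
    rw [KK, if_neg, add_zero]
    refine not_int (by positivity) ?_
    rw [abs_of_nonneg (by positivity), ← div_eq_mul_inv, div_lt_one (by positivity)]
    exact hj'
  rw [Finset.sum_range_succ'] at hc ⊢
  rw [Finset.sum_range_succ' (fun j : ℕ => KK i (j * ((n+1:ℕ):ℝ)⁻¹)), Finset.sum_congr rfl h1,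
    Finset.sum_sub_distrib, ← Finset.mul_sum]
  simp only [Nat.cast_zero, zero_mul, mul_zero, cot_zero', add_zero] at hc ⊢
  rw [hc, KK_zero, i.2.zero]
  simp [cot_zero']

lemma PV_tendsto (hL : 0 < L) (hm₁ : 0 < m₁) (i : AI L m₁ m₂) :
    Tendsto (fun δ : ℝ => ∫ t in δ..(1 - δ), Real.cot (π * (0 - i.1 t) / L)) (𝓝[>] (0:ℝ))
      (𝓝 (-∫ t in (0:ℝ)..1, KK i t)) := by
  have hπ := Real.pi_pos
  have hKc : Continuous (KK i) := ((KK_smooth hL hm₁).1 i).continuous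
  have hlim : Tendsto (fun δ : ℝ => -∫ t in δ..(1 - δ), KK i t) (𝓝[>] (0:ℝ))
      (𝓝 (-∫ t in (0:ℝ)..1, KK i t)) := by
    have hcont : Continuous (fun δ : ℝ => -((∫ t in (0:ℝ)..(1 - δ), KK i t) - ∫ t in (0:ℝ)..δ, KK i t)) := by
      have := intervalIntegral.continuous_primitive (μ := volume)
        (fun a b => hKc.intervalIntegrable a b) 0
      exact ((this.comp (continuous_const.sub continuous_id)).sub this).neg
    have h := (hcont.tendsto 0).mono_left (nhdsWithin_le_nhds (s := Set.Ioi 0))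
    simp only [sub_zero, intervalIntegral.integral_same] at h
    refine h.congr fun δ => ?_
    rw [intervalIntegral.integral_interval_sub_left (hKc.intervalIntegrable _ _)
      (hKc.intervalIntegrable _ _)]
  refine hlim.congr' ?_
  have hmem : Set.Ioo (0:ℝ) (1/2) ∈ 𝓝[>] (0:ℝ) := Ioo_mem_nhdsGT (by norm_num)
  filter_upwards [hmem] with δ hδ
  obtain ⟨hδ0, hδ1⟩ := hδ
  have hle : δ ≤ 1 - δ := by linarith
  have hcot0 : ∫ t in δ..(1 - δ), Real.cot (π * t) = 0 := by
    have h := intervalIntegral.integral_comp_sub_left (a := δ) (b := 1 - δ)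
      (fun t => Real.cot (π * t)) 1
    have e : ∀ t : ℝ, Real.cot (π * (1 - t)) = - Real.cot (π * t) := fun t => by
      rw [← cot_neg', ← cot_add_pi (-(π * t))]
      congr 1
      ring
    simp only [e, intervalIntegral.integral_neg, sub_sub_cancel] at h
    linarith
  have hcoti : IntervalIntegrable (fun t => Real.cot (π * t)) volume δ (1 - δ) := by
    apply ContinuousOn.intervalIntegrable
    rw [Set.uIcc_of_le hle]
    simp_rw [Real.cot_eq_cos_div_sin]
    refine ContinuousOn.div (by fun_prop) (by fun_prop) fun t ht => ?_
    exact (Real.sin_pos_of_pos_of_lt_pi (by nlinarith [ht.1]) (by nlinarith [ht.2])).ne'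
  have e : ∫ t in δ..(1 - δ), Real.cot (π * (0 - i.1 t) / L)
      = ∫ t in δ..(1 - δ), (-(KK i t) - L * qq i 0 * Real.cot (π * t)) := by
    refine intervalIntegral.integral_congr fun t ht => ?_
    rw [Set.uIcc_of_le hle] at ht
    have h0 : 0 < t := by linarith [ht.1]
    have h1 : t < 1 := by linarith [ht.2]
    rw [KK, if_neg (not_int h0.ne' (by rw [abs_of_pos h0]; exact h1)), zero_sub, mul_neg, neg_div,
      cot_neg']
    ring
  rw [e, intervalIntegral.integral_sub
    ((show Continuous (fun t => -(KK i t)) from hKc.neg).intervalIntegrable _ _) (hcoti.const_mul _),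
    intervalIntegral.integral_const_mul, hcot0, intervalIntegral.integral_neg]
  ring

lemma main_g (hL : 0 < L) (hm₁ : 0 < m₁) : ∃ C : ℝ, 0 < C ∧ ∀ (i : AI L m₁ m₂) (N : ℕ), 2 ≤ N →
    |(-(2 * π * (N:ℝ)⁻¹ / L ^ 2) * (∑ j ∈ Finset.range N, Real.cot (π * i.1 (j * (N:ℝ)⁻¹) / L))
      + (1 / i.1 (-(N:ℝ)⁻¹) + 1 / i.1 ((N:ℝ)⁻¹))
      + (N:ℝ)⁻¹ ^ 2 * (1 / i.1 (-(N:ℝ)⁻¹) ^ 3 + 1 / i.1 ((N:ℝ)⁻¹) ^ 3))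
      - ((2 * π / L ^ 2) * (-∫ t in (0:ℝ)..1, KK i t)
        + 2 * qq1 i 0 + 2 * pp1 i 0 + 2 * qq1 i 0 / L * (N:ℝ)⁻¹
        + (qq3 i 0 / 3 + pp3 i 0 / 3) * (N:ℝ)⁻¹ ^ 2)| ≤ C * (N:ℝ)⁻¹ ^ 4 := by
  have hπ := Real.pi_pos
  obtain ⟨hK, M, hM0, hM⟩ := KK_smooth (L := L) (m₂ := m₂) hL hm₁
  obtain ⟨A, hA0, hA⟩ := taylor_odd (fun (i : AI L m₁ m₂) t ht => qq_deriv hm₁ i ht)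
    (fun i t ht => qq1_deriv hm₁ i ht) (fun i t ht => qq2_deriv hm₁ i ht) (UB_qq3 hm₁)
  obtain ⟨B, hB0, hB⟩ := taylor_odd (fun (i : AI L m₁ m₂) t ht => pp_deriv hm₁ i ht)
    (fun i t ht => pp1_deriv hm₁ i ht) (fun i t ht => pp2_deriv hm₁ i ht) (UB_pp3 hm₁)
  refine ⟨2 * π / L ^ 2 * M + A + B + 1, by positivity, fun i N hN => ?_⟩
  have hN' : (2:ℝ) ≤ N := by exact_mod_cast hN
  have hT := trap_periodic (hK i) (KK_per hL i) (hM i) N (by omega)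
  rw [sum_F i N (by omega)]
  set a : ℝ := (N:ℝ)⁻¹ with ha
  have ha0 : 0 < a := by positivity
  have ha1 : a ≤ 1/2 := by
    rw [ha, one_div]
    exact inv_anti₀ (by norm_num) hN'
  have hA' := hA i a ⟨ha0.le, ha1⟩
  have hB' := hB i a ⟨ha0.le, ha1⟩
  have hap : a ∈ UU := ⟨by linarith, by linarith⟩
  have han : -a ∈ UU := ⟨by linarith, by linarith⟩
  have hn1 : hh 0 i a ≠ 0 := by linarith [hh_le i hap]
  have hn2 : hh 0 i (-a) ≠ 0 := by linarith [hh_le i han]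
  have g1 : 1 / i.1 a = qq i a / a := by
    rw [g_eq i hap, qq]; field_simp
  have g2 : 1 / i.1 (-a) = - (qq i (-a) / a) := by
    rw [g_eq i han, qq]; field_simp
  have g3 : 1 / i.1 a ^ 3 = pp i a / a ^ 3 := by
    rw [← one_div_pow, g1, pp, div_pow]
  have g4 : 1 / i.1 (-a) ^ 3 = - (pp i (-a) / a ^ 3) := by
    rw [← one_div_pow, g2, pp]; ring
  rw [g1, g2, g3, g4]
  set S := ∑ j ∈ Finset.range N, KK i (j * a)
  set I := ∫ t in (0:ℝ)..1, KK i t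
  have e : (-(2 * π * a / L ^ 2) * (S - L / π * qq1 i 0) + (-(qq i (-a) / a) + qq i a / a)
      + a ^ 2 * (-(pp i (-a) / a ^ 3) + pp i a / a ^ 3))
      - (2 * π / L ^ 2 * (-I) + 2 * qq1 i 0 + 2 * pp1 i 0 + 2 * qq1 i 0 / L * a
        + (qq3 i 0 / 3 + pp3 i 0 / 3) * a ^ 2)
      = -(2 * π / L ^ 2) * (a * S - I)
        + (qq i a - qq i (-a) - 2 * a * qq1 i 0 - a ^ 3 / 3 * qq3 i 0) / a
        + (pp i a - pp i (-a) - 2 * a * pp1 i 0 - a ^ 3 / 3 * pp3 i 0) / a := by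
    field_simp
    ring
  rw [e]
  have b1 : |-(2 * π / L ^ 2) * (a * S - I)| ≤ 2 * π / L ^ 2 * (M * a ^ 4) := by
    rw [abs_mul, abs_neg, abs_of_pos (by positivity)]
    gcongr
  have b2 : |(qq i a - qq i (-a) - 2 * a * qq1 i 0 - a ^ 3 / 3 * qq3 i 0) / a| ≤ A * a ^ 4 := by
    rw [abs_div, abs_of_pos ha0, div_le_iff₀ ha0]
    linarith [hA', show A * a ^ 4 * a = A * a ^ 5 by ring]
  have b3 : |(pp i a - pp i (-a) - 2 * a * pp1 i 0 - a ^ 3 / 3 * pp3 i 0) / a| ≤ B * a ^ 4 := by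
    rw [abs_div, abs_of_pos ha0, div_le_iff₀ ha0]
    linarith [hB', show B * a ^ 4 * a = B * a ^ 5 by ring]
  have := abs_add_three (-(2 * π / L ^ 2) * (a * S - I))
    ((qq i a - qq i (-a) - 2 * a * qq1 i 0 - a ^ 3 / 3 * qq3 i 0) / a)
    ((pp i a - pp i (-a) - 2 * a * pp1 i 0 - a ^ 3 / 3 * pp3 i 0) / a)
  have : 0 < a ^ 4 := by positivity
  linarith [show (2 * π / L ^ 2 * M + A + B + 1) * a ^ 4 =
    2 * π / L ^ 2 * (M * a ^ 4) + A * a ^ 4 + B * a ^ 4 + a ^ 4 by ring]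

end main

lemma iteratedDeriv_shift (φ : ℝ → ℝ) (α : ℝ) (j : ℕ) (t : ℝ) :
    iteratedDeriv (j+1) (fun t => φ (α + t) - φ α) t = iteratedDeriv (j+1) φ (α + t) := by
  have : deriv (fun t => φ (α + t) - φ α) = fun t => deriv φ (α + t) := by
    funext s
    rw [deriv_sub_const, deriv_comp_const_add]
  rw [iteratedDeriv_succ', this, iteratedDeriv_comp_const_add, ← iteratedDeriv_succ']

/-- Full expansion of the exact-solution chemical potential `f̄(α*)` at any
grid point `α* = i₀·a` (sum over any window `G = {k, …, k+N−1}` of `N` consecutive integers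
containing `i₀`):
`f̄(α*) = μ(α*) + v₁(α*)·a + (v₂+v₃)(α*)·a² + R`, `|R| ≤ C·a⁴`, `C = C(m₁,m₂,L)`,
where `μ(α) = (2π/L²)·PV∫₀¹ cot(π(φ(α)−φ(β))/L) dβ − φ″/φ′² − 3φ″/φ′⁴`. The principal value
over one period (with the symmetric `δ`-neighbourhood of `β ≡ α (mod 1)` removed) is
expressed via the interval `(α+δ, α+1−δ)` using `1`-periodicity of the integrand. -/
theorem stmt_15 (L m₁ m₂ : ℝ) (hL : 0 < L) (hm₁ : 0 < m₁) (hm₂ : 0 < m₂) :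
    ∃ C : ℝ, 0 < C ∧
      ∀ N : ℕ, 2 ≤ N →
        ∀ φ : ℝ → ℝ, ContDiff ℝ 6 φ →
          (∀ α : ℝ, φ (α + 1) = φ α - L) →
          (∀ α : ℝ, deriv φ α ≤ -m₁) →
          (∀ k : ℕ, 1 ≤ k → k ≤ 6 → ∀ α : ℝ, |iteratedDeriv k φ α| ≤ m₂) →
          ∀ i₀ k : ℤ, k ≤ i₀ → i₀ < k + (N:ℤ) →
            ∃ P R : ℝ,
              Tendsto (fun δ : ℝ =>
                  ∫ β in ((i₀:ℝ) * (N:ℝ)⁻¹ + δ)..((i₀:ℝ) * (N:ℝ)⁻¹ + 1 - δ),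
                    Real.cot (π * (φ ((i₀:ℝ) * (N:ℝ)⁻¹) - φ β) / L))
                (𝓝[>] (0:ℝ)) (𝓝 P) ∧
              -(2 * π * (N:ℝ)⁻¹ / L ^ 2) *
                  (∑ j ∈ (Finset.Ico k (k + (N:ℤ))).erase i₀,
                    Real.cot (π * (φ ((j:ℝ) * (N:ℝ)⁻¹) - φ ((i₀:ℝ) * (N:ℝ)⁻¹)) / L))
                + (1 / (φ ((i₀:ℝ) * (N:ℝ)⁻¹ - (N:ℝ)⁻¹) - φ ((i₀:ℝ) * (N:ℝ)⁻¹))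
                  - 1 / (φ ((i₀:ℝ) * (N:ℝ)⁻¹) - φ ((i₀:ℝ) * (N:ℝ)⁻¹ + (N:ℝ)⁻¹)))
                + (N:ℝ)⁻¹ ^ 2 *
                  (1 / (φ ((i₀:ℝ) * (N:ℝ)⁻¹ - (N:ℝ)⁻¹) - φ ((i₀:ℝ) * (N:ℝ)⁻¹)) ^ 3
                  - 1 / (φ ((i₀:ℝ) * (N:ℝ)⁻¹) - φ ((i₀:ℝ) * (N:ℝ)⁻¹ + (N:ℝ)⁻¹)) ^ 3)
                = ((2 * π / L ^ 2) * P
                    - iteratedDeriv 2 φ ((i₀:ℝ) * (N:ℝ)⁻¹) / (deriv φ ((i₀:ℝ) * (N:ℝ)⁻¹)) ^ 2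
                    - 3 * iteratedDeriv 2 φ ((i₀:ℝ) * (N:ℝ)⁻¹)
                        / (deriv φ ((i₀:ℝ) * (N:ℝ)⁻¹)) ^ 4)
                  + v1coef L φ ((i₀:ℝ) * (N:ℝ)⁻¹) * (N:ℝ)⁻¹
                  + (v2coef φ ((i₀:ℝ) * (N:ℝ)⁻¹) + v3coef φ ((i₀:ℝ) * (N:ℝ)⁻¹)) * (N:ℝ)⁻¹ ^ 2
                  + R ∧
              |R| ≤ C * (N:ℝ)⁻¹ ^ 4 := by
  obtain ⟨C, hC, hmain⟩ := main_g (L := L) (m₁ := m₁) (m₂ := m₂) hL hm₁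
  refine ⟨C, hC, fun N hN φ hφ hper hder hbd i₀ k hk1 hk2 => ?_⟩
  have hN0 : (N:ℝ) ≠ 0 := by positivity
  set a : ℝ := (N:ℝ)⁻¹ with ha
  set α : ℝ := (i₀:ℝ) * a with hα
  have hit := iteratedDeriv_shift φ α
  let i : AI L m₁ m₂ := ⟨fun t => φ (α + t) - φ α, by
    refine ⟨?_, by simp, fun t => ?_, fun t => ?_, fun k h1 h2 t => ?_⟩
    · exact (hφ.comp (contDiff_const.add contDiff_id)).sub contDiff_const
    · have := hper (α + t)
      rw [← add_assoc, this]
      ring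
    · have := hit 0 t
      simp only [zero_add, iteratedDeriv_one] at this
      rw [this]
      exact hder _
    · obtain ⟨j, rfl⟩ : ∃ j, k = j + 1 := ⟨k - 1, by omega⟩
      rw [hit j t]
      exact hbd _ h1 h2 _⟩
  have hi : ∀ t, i.1 t = φ (α + t) - φ α := fun t => rfl
  have hd : ∀ j : ℕ, iteratedDeriv (j+1) i.1 0 = iteratedDeriv (j+1) φ α := fun j => by
    have := hit j 0
    rw [add_zero] at this
    exact this
  have hm := hmain i N hN
  rw [← ha] at hm
  refine ⟨-∫ t in (0:ℝ)..1, KK i t, _, ?_, (add_sub_cancel _ _).symm, ?_⟩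
  · refine (PV_tendsto hL hm₁ i).congr fun δ => ?_
    have h := intervalIntegral.integral_comp_add_left (a := δ) (b := 1 - δ)
      (fun β => Real.cot (π * (φ α - φ β) / L)) α
    rw [← add_sub_assoc] at h
    rw [← h]
    refine intervalIntegral.integral_congr fun t _ => ?_
    simp only [hi]
    congr 2
    ring
  · have hsum : ∑ j ∈ (Finset.Ico k (k + (N:ℤ))).erase i₀,
        Real.cot (π * (φ ((j:ℝ) * a) - φ α) / L)
        = ∑ j ∈ Finset.range N, Real.cot (π * i.1 (j * a) / L) := by
      rw [Finset.sum_erase _ (by simp [← hα, cot_zero'])]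
      let f : ℤ → ℝ := fun j => Real.cot (π * i.1 (j * a) / L)
      have hf : ∀ j, f (j + N) = f j := fun j => by
        simp only [f]
        rw [← F_per hL i ((j:ℝ) * a)]
        congr 4
        push_cast
        rw [ha]
        field_simp
      have hs := sum_Ico_periodic (f := fun j => f (j - i₀)) N
        (fun j => by rw [← hf (j - i₀)]; congr 1; ring) k
      have hs2 := sum_Ico_periodic (f := fun j => f (j - i₀)) N
        (fun j => by rw [← hf (j - i₀)]; congr 1; ring) i₀
      have e2 : ∑ j ∈ Finset.Ico i₀ (i₀ + (N:ℤ)), f (j - i₀) = ∑ j ∈ Finset.range N, f j := by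
        rw [Int.Ico_eq_finset_map, Finset.sum_map]
        simp
      have : ∑ j ∈ Finset.Ico k (k + (N:ℤ)), Real.cot (π * (φ ((j:ℝ) * a) - φ α) / L)
          = ∑ j ∈ Finset.Ico k (k + (N:ℤ)), f (j - i₀) := by
        refine Finset.sum_congr rfl fun j _ => ?_
        simp only [f, hi]
        congr 5
        push_cast
        rw [hα]
        ring
      rw [this, hs, ← hs2, e2]
      simp [f]
    have e1 : φ (α - a) - φ α = i.1 (-a) := by rw [hi, ← sub_eq_add_neg]
    have e2 : φ α - φ (α + a) = -(i.1 a) := by rw [hi]; ring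
    rw [hsum, e1, e2]
    have d1 : deriv φ α = iteratedDeriv 1 φ α := by rw [iteratedDeriv_one]
    have hne : iteratedDeriv 1 φ α ≠ 0 := by
      rw [← d1]
      linarith [hder α]
    have q0 : qq i 0 = (iteratedDeriv 1 φ α)⁻¹ := by
      rw [qq, hh_zero, hd]; simp
    have h1 : hh 1 i 0 = iteratedDeriv 2 φ α / 2 := by
      rw [hh_zero, hd]; norm_num
    have h2 : hh 2 i 0 = iteratedDeriv 3 φ α / 3 := by
      rw [hh_zero, hd]; norm_num
    have h3 : hh 3 i 0 = iteratedDeriv 4 φ α / 4 := by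
      rw [hh_zero, hd]; norm_num
    convert hm using 2
    simp only [v1coef, v2coef, v3coef, qq1, qq3, pp1, pp3, d1, q0, h1, h2, h3]
    have r1 : (1:ℝ) / -(i.1 a) = -(1 / i.1 a) := by rw [div_neg]
    have r3 : (1:ℝ) / (-(i.1 a)) ^ 3 = -(1 / i.1 a ^ 3) := by
      rw [show (-(i.1 a)) ^ 3 = -(i.1 a ^ 3) by ring, div_neg]
    rw [r1, r3]
    congr 1
    · ring
    · field_simp
      ring
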